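/- arXiv:1812.04490 — 8 statements merged into one kernel-verified Lean document; each statement's English description precedes it below -/
import Mathlib

section
/- For every positive integer n and all nonnegative integers a_1, …, a_n, the constant term of F_n(x; a; 0) = ∏_{1≤i≠j≤n} (1 − x_i/x_j)^{a_j} equals the multinomial coefficient (a_1 + a_2 + ⋯ + a_n)! / (a_1! a_2! ⋯ a_n!). Equivalently, the coefficient of ∏_{j=1}^n x_j^{(n−1)a_j} in the polynomial ∏_{1≤i≠j≤n} (x_j − x_i)^{a_j} over ℤ equals (a_1 + ⋯ + a_n)! / (a_1! ⋯ a_n!). -/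
/-- The polynomial `∏_{1 ≤ i ≠ j ≤ n} (x_j - x_i)^{a_j}` over `ℤ`. -/
noncomputable def dysonPoly (n : ℕ) (a : Fin n → ℕ) : MvPolynomial (Fin n) ℤ :=
  ∏ j : Fin n, ∏ i ∈ Finset.univ.erase j, (MvPolynomial.X j - MvPolynomial.X i) ^ a j

/-- The constant term `c_n(a; b)` of the Laurent polynomial
`F_n(x; a; b) = ∏_h x_h^{-b_h} ∏_{1 ≤ i ≠ j ≤ n} (1 - x_i/x_j)^{a_j}`, i.e. the
coefficient of `∏_j x_j^{(n-1)a_j + b_j}` in `∏_{1 ≤ i ≠ j ≤ n} (x_j - x_i)^{a_j}`,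
taken to be `0` if some exponent `(n-1)a_j + b_j` is negative. -/
noncomputable def dysonCT (n : ℕ) (a : Fin n → ℕ) (b : Fin n → ℤ) : ℤ :=
  if ∀ j, 0 ≤ ((n : ℤ) - 1) * a j + b j then
    MvPolynomial.coeff
      (Finsupp.equivFunOnFinite.symm fun j => (((n : ℤ) - 1) * a j + b j).toNat)
      (dysonPoly n a)
  else 0

namespace DysonAux

open Finset MvPolynomial

variable {ι : Type} [DecidableEq ι]

/-- The factor `∏_{i ≠ j} (x_j - x_i)`. -/
noncomputable def fac (s : Finset ι) (j : ι) : MvPolynomial ι ℤ :=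
  ∏ i ∈ s.erase j, (X j - X i)

/-- The Dyson polynomial over a finite index set. -/
noncomputable def poly (s : Finset ι) (a : ι → ℕ) : MvPolynomial ι ℤ :=
  ∏ j ∈ s, fac s j ^ a j

/-- The exponent of interest. -/
noncomputable def expo (s : Finset ι) (a : ι → ℕ) : ι →₀ ℕ :=
  ∑ j ∈ s, Finsupp.single j ((#s - 1) * a j)

theorem lagrange (s : Finset ι) (hs : s.Nonempty) :
    ∏ j ∈ s, fac s j = ∑ j ∈ s, X j ^ (#s - 1) * ∏ l ∈ s.erase j, fac s l := by
  let K := FractionRing (MvPolynomial ι ℤ)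
  let φ : MvPolynomial ι ℤ →+* K := algebraMap _ _
  have hφ : Function.Injective φ := IsFractionRing.injective _ _
  apply hφ
  have hinj : Set.InjOn (fun i : ι => φ (X i)) s := by
    intro i _ j _ h
    exact X_injective (hφ h)
  have hne : ∀ j ∈ s, φ (fac s j) ≠ 0 := by
    intro j hj
    rw [fac, map_prod, prod_ne_zero_iff]
    intro i hi
    rw [map_sub, sub_ne_zero]
    intro h
    exact (mem_erase.1 hi).1 (hinj (mem_erase.1 hi).2 hj h.symm)
  have hc : 0 < #s := hs.card_pos
  have key := Lagrange.leadingCoeff_eq_sum (s := s) hinj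
    (P := (Polynomial.X ^ (#s - 1) : Polynomial K)) (by
      rw [Polynomial.degree_X_pow]; norm_cast; omega)
  rw [(Polynomial.monic_X_pow _).leadingCoeff] at key
  have h2 : φ (∏ j ∈ s, fac s j) * 1 = φ (∏ j ∈ s, fac s j) *
      ∑ j ∈ s, φ (X j) ^ (#s - 1) / φ (fac s j) := by
    congr 1
    rw [key]
    apply sum_congr rfl
    intro j _
    simp [fac]
  rw [mul_one] at h2
  rw [h2, map_sum, mul_sum]
  apply sum_congr rfl
  intro j hj
  rw [← mul_prod_erase _ _ hj]
  have := hne j hj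
  rw [map_mul, map_mul, map_pow, mul_comm (φ (fac s j)), mul_assoc, mul_div_cancel₀ _ this, mul_comm]

theorem poly_rec (s : Finset ι) (hs : s.Nonempty) (a : ι → ℕ) (ha : ∀ j ∈ s, a j ≠ 0) :
    poly s a = ∑ j ∈ s, X j ^ (#s - 1) * poly s (Function.update a j (a j - 1)) := by
  have h1 : poly s a = (∏ j ∈ s, fac s j) * ∏ j ∈ s, fac s j ^ (a j - 1) := by
    rw [poly, ← prod_mul_distrib]
    apply prod_congr rfl
    intro j hj
    rw [← pow_succ', Nat.sub_add_cancel (Nat.pos_of_ne_zero (ha j hj))]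
  rw [h1, lagrange s hs, sum_mul]
  apply sum_congr rfl
  intro j hj
  rw [mul_assoc]
  congr 1
  rw [poly, ← mul_prod_erase _ _ hj, ← mul_prod_erase s (fun l => fac s l ^ _) hj,
    Function.update_self, mul_left_comm, ← prod_mul_distrib]
  congr 1
  apply prod_congr rfl
  intro l hl
  obtain ⟨h, h'⟩ := mem_erase.1 hl
  rw [Function.update_of_ne h, ← pow_succ', Nat.sub_add_cancel (Nat.pos_of_ne_zero (ha l h'))]

theorem expo_rec (s : Finset ι) (a : ι → ℕ) (j : ι) (hj : j ∈ s) (ha : a j ≠ 0) :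
    expo s a = Finsupp.single j (#s - 1) + expo s (Function.update a j (a j - 1)) := by
  rw [expo, expo, ← add_sum_erase _ _ hj, ← add_sum_erase s (fun l => Finsupp.single l _) hj,
    ← add_assoc, ← Finsupp.single_add, Function.update_self]
  congr 1
  · obtain ⟨b, hb⟩ := Nat.exists_eq_succ_of_ne_zero ha
    rw [hb]
    congr 1
    simp; ring
  · apply sum_congr rfl
    intro l hl
    rw [Function.update_of_ne (mem_erase.1 hl).1]

theorem multinomial_rec (s : Finset ι) (hs : s.Nonempty) (a : ι → ℕ) (ha : ∀ j ∈ s, a j ≠ 0) :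
    Nat.multinomial s a = ∑ j ∈ s, Nat.multinomial s (Function.update a j (a j - 1)) := by
  have hpos : 0 < ∏ i ∈ s, (a i).factorial := prod_pos fun i _ => Nat.factorial_pos _
  apply Nat.eq_of_mul_eq_mul_left hpos
  rw [Nat.multinomial_spec, mul_sum]
  have hN : 0 < ∑ i ∈ s, a i := sum_pos (fun i hi => Nat.pos_of_ne_zero (ha i hi)) hs
  rw [← Nat.mul_factorial_pred hN.ne', sum_mul]
  apply sum_congr rfl
  intro j hj
  have hsum : ∑ i ∈ s, Function.update a j (a j - 1) i = ∑ i ∈ s, a i - 1 := by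
    rw [← add_sum_erase _ _ hj, ← add_sum_erase s a hj, Function.update_self,
      sum_congr rfl (g := fun i => a i) fun l hl => Function.update_of_ne (mem_erase.1 hl).1 _ _]
    have := ha j hj
    omega
  rw [← hsum, ← Nat.multinomial_spec, ← mul_assoc]
  congr 1
  rw [← mul_prod_erase _ _ hj, ← mul_prod_erase s (fun i => (a i).factorial) hj,
    Function.update_self, ← mul_assoc, Nat.mul_factorial_pred (ha j hj)]
  congr 1
  apply prod_congr rfl
  intro l hl
  rw [Function.update_of_ne (mem_erase.1 hl).1]

theorem coeff_congr (k : ι) (m : ι →₀ ℕ) (hm : m k = 0) (p q : MvPolynomial ι ℤ)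
    (h : (X k : MvPolynomial ι ℤ) ∣ p - q) : coeff m p = coeff m q := by
  obtain ⟨r, hr⟩ := h
  rw [← sub_eq_zero, ← coeff_sub, hr, coeff_X_mul', if_neg]
  simp [hm]

theorem poly_insert (t : Finset ι) (k : ι) (hk : k ∉ t) (a : ι → ℕ) (ha : a k = 0) :
    poly (insert k t) a = (∏ j ∈ t, (X j - X k) ^ a j) * poly t a := by
  rw [poly, prod_insert hk, ha, pow_zero, one_mul, poly, ← prod_mul_distrib]
  apply prod_congr rfl
  intro j hj
  have hjk : k ≠ j := fun h => hk (h ▸ hj)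
  rw [← mul_pow, fac, fac, erase_insert_of_ne hjk, prod_insert]
  exact fun h => hk (mem_erase.1 h).2

theorem coeff_insert (t : Finset ι) (k : ι) (hk : k ∉ t) (a : ι → ℕ) (ha : a k = 0) :
    coeff (expo (insert k t) a) (poly (insert k t) a) = coeff (expo t a) (poly t a) := by
  have hexp : expo (insert k t) a = (∑ j ∈ t, Finsupp.single j (a j)) + expo t a := by
    rw [expo, sum_insert hk, ha, mul_zero, Finsupp.single_zero, zero_add, expo,
      ← sum_add_distrib, card_insert_of_notMem hk]
    apply sum_congr rfl
    intro j hj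
    rw [← Finsupp.single_add]
    congr 1
    obtain ⟨c, hc⟩ := Nat.exists_eq_succ_of_ne_zero (card_pos.2 ⟨j, hj⟩).ne'
    rw [hc]
    simp; ring
  have hz : expo (insert k t) a k = 0 := by
    rw [expo, Finsupp.finsetSum_apply]
    apply sum_eq_zero
    intro j _
    by_cases h : j = k
    · subst h; simp [ha]
    · simp [h]
  have hmon : (∏ j ∈ t, X j ^ a j : MvPolynomial ι ℤ)
      = monomial (∑ j ∈ t, Finsupp.single j (a j)) 1 := by
    rw [monomial_sum_one]
    apply prod_congr rfl
    intro j _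
    rw [X_pow_eq_monomial]
  rw [poly_insert t k hk a ha,
    coeff_congr k _ hz _ ((∏ j ∈ t, X j ^ a j) * poly t a), hmon, hexp, coeff_monomial_mul, one_mul]
  rw [← sub_mul]
  apply Dvd.dvd.mul_right
  rw [← Ideal.mem_span_singleton, ← Ideal.Quotient.mk_eq_mk_iff_sub_mem, map_prod, map_prod]
  apply prod_congr rfl
  intro j _
  have : Ideal.Quotient.mk (Ideal.span {(X k : MvPolynomial ι ℤ)}) (X k) = 0 :=
    Ideal.Quotient.eq_zero_iff_mem.2 (Ideal.mem_span_singleton_self _)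
  rw [map_pow, map_pow, map_sub, this, sub_zero]

theorem main (N : ℕ) : ∀ (s : Finset ι) (a : ι → ℕ), #s + ∑ j ∈ s, a j = N →
    coeff (expo s a) (poly s a) = (Nat.multinomial s a : ℤ) := by
  induction N using Nat.strong_induction_on with
  | _ N ih =>
  intro s a hN
  rcases s.eq_empty_or_nonempty with rfl | hs
  · simp [expo, poly]
  by_cases h : ∃ k ∈ s, a k = 0
  · obtain ⟨k, hk, hak⟩ := h
    have hnk : k ∉ s.erase k := notMem_erase k s
    have hc := card_erase_add_one hk
    have hsum := add_sum_erase s a hk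
    rw [← insert_erase hk, coeff_insert _ _ hnk a hak, Nat.multinomial_insert hnk, hak]
    simp only [zero_add, Nat.choose_zero_right, one_mul]
    exact ih _ (by omega) _ a rfl
  · push Not at h
    rw [poly_rec s hs a h, multinomial_rec s hs a h, coeff_sum, Nat.cast_sum]
    apply sum_congr rfl
    intro j hj
    rw [expo_rec s a j hj (h j hj), X_pow_eq_monomial, coeff_monomial_mul, one_mul]
    refine ih _ ?_ s _ rfl
    have hlt : ∑ i ∈ s, Function.update a j (a j - 1) i < ∑ i ∈ s, a i := by
      apply sum_lt_sum
      · intro i _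
        by_cases hi : i = j
        · subst hi; simp
        · simp [hi]
      · exact ⟨j, hj, by have := h j hj; simp; omega⟩
    omega

end DysonAux

/-- Dyson's conjecture: the constant term of `F_n(x; a; 0)` is the multinomial
coefficient `(a_1 + ⋯ + a_n)! / (a_1! ⋯ a_n!)`. -/
theorem dyson_conjecture (n : ℕ) (hn : 0 < n) (a : Fin n → ℕ) :
    dysonCT n a 0 = (Nat.multinomial Finset.univ a : ℤ) := by
  have hcast : ∀ j, ((n : ℤ) - 1) * a j + (0 : Fin n → ℤ) j = (((n - 1) * a j : ℕ) : ℤ) := by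
    intro j
    push_cast [Nat.cast_sub hn]
    simp
  rw [← DysonAux.main _ Finset.univ a rfl, dysonCT, if_pos (fun j => by rw [hcast]; positivity)]
  congr 1
  · ext j
    simp only [hcast, Int.toNat_natCast, DysonAux.expo, Finset.card_univ, Fintype.card_fin]
    simp [Finsupp.finsetSum_apply, Finsupp.single_apply]
  · simp only [dysonPoly, DysonAux.poly, DysonAux.fac, Finset.prod_pow]
end

section
/- For every positive integer n, integers b_1, …, b_n, and positive integers a_1, …, a_n, the Laurent polynomial identity F_n(x; a; b) = Σ_{i=1}^n F_n(x; ⟨a_1, …, a_{i−1}, a_i − 1, a_{i+1}, …, a_n⟩; b) holds in the ring of Laurent polynomials (equivalently, in the field of rational functions ℚ(x_1, …, x_n)). -/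
/-- `F_n(x; a; b) = ∏_h x_h^{-b_h} ∏_{1 ≤ i ≠ j ≤ n} (1 - x_i/x_j)^{a_j}`,
as an element of a field `K` in which the variables `x` take values. -/
noncomputable def dysonF {n : ℕ} {K : Type*} [Field K] (x : Fin n → K)
    (a : Fin n → ℕ) (b : Fin n → ℤ) : K :=
  (∏ h : Fin n, x h ^ (-(b h))) *
    ∏ j : Fin n, ∏ i ∈ Finset.univ.erase j, (1 - x i / x j) ^ a j

/-- The variables of the rational function field `ℚ(x_1, …, x_n)`. -/
noncomputable def xvar (n : ℕ) : Fin n → FractionRing (MvPolynomial (Fin n) ℚ) :=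
  fun i => algebraMap (MvPolynomial (Fin n) ℚ) _ (MvPolynomial.X i)

theorem good_sum_eq_one {n : ℕ} (hn : 0 < n) {K : Type*} [Field K] (x : Fin n → K)
    (hx0 : ∀ i, x i ≠ 0) (hx : Function.Injective x) :
    ∑ j : Fin n, ∏ i ∈ Finset.univ.erase j, (1 - x i / x j)⁻¹ = 1 := by
  have hinj : Set.InjOn (fun i => (x i)⁻¹) (↑(Finset.univ : Finset (Fin n))) := by
    intro i _ j _ h
    exact hx (inv_injective h)
  have hne : (Finset.univ : Finset (Fin n)).Nonempty := ⟨⟨0, hn⟩, Finset.mem_univ _⟩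
  have h := congrArg (Polynomial.eval 0) (Lagrange.sum_basis hinj hne)
  rw [Polynomial.eval_finsetSum, Polynomial.eval_one] at h
  refine Eq.trans ?_ h
  refine Finset.sum_congr rfl fun j _ => ?_
  rw [Lagrange.basis, Polynomial.eval_prod]
  refine Finset.prod_congr rfl fun i hi => ?_
  have hij : i ≠ j := Finset.ne_of_mem_erase hi
  have h1 : x j - x i ≠ 0 := sub_ne_zero.2 fun h => hij (hx h.symm)
  have h2 : x i - x j ≠ 0 := sub_ne_zero.2 fun h => hij (hx h)
  have hi0 := hx0 i
  have hj0 := hx0 j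
  have e1 : 1 - x i / x j = (x j - x i) / x j := by field_simp
  have e2 : (x j)⁻¹ - (x i)⁻¹ = (x i - x j) / (x i * x j) := by field_simp
  simp only [Lagrange.basisDivisor, Polynomial.eval_mul, Polynomial.eval_C, Polynomial.eval_sub,
    Polynomial.eval_X]
  rw [e1, e2, inv_div, inv_div]
  field_simp
  ring

/-- Good's recursion: for `a_1, …, a_n ≥ 1`,
`F_n(x; a; b) = ∑_{i=1}^n F_n(x; ⟨a_1, …, a_i - 1, …, a_n⟩; b)`
in the field of rational functions `ℚ(x_1, …, x_n)`. -/
theorem dysonF_recursion (n : ℕ) (hn : 0 < n) (b : Fin n → ℤ) (a : Fin n → ℕ)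
    (ha : ∀ i, 1 ≤ a i) :
    dysonF (xvar n) a b
      = ∑ i : Fin n, dysonF (xvar n) (Function.update a i (a i - 1)) b := by
  have hx0 : ∀ i, xvar n i ≠ 0 := by
    intro i h
    have h' := (IsFractionRing.injective (MvPolynomial (Fin n) ℚ)
      (FractionRing (MvPolynomial (Fin n) ℚ))) (h.trans (map_zero _).symm)
    exact MvPolynomial.X_ne_zero i h'
  have hx : Function.Injective (xvar n) := by
    intro i j h
    exact MvPolynomial.X_injective (IsFractionRing.injective (MvPolynomial (Fin n) ℚ)
      (FractionRing (MvPolynomial (Fin n) ℚ)) h)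
  generalize xvar n = x at hx0 hx
  have key : ∀ k : Fin n, dysonF x (Function.update a k (a k - 1)) b
      = dysonF x a b * ∏ i ∈ Finset.univ.erase k, (1 - x i / x k)⁻¹ := by
    intro k
    unfold dysonF
    rw [mul_assoc]
    refine congrArg₂ (· * ·) rfl ?_
    rw [← Finset.mul_prod_erase Finset.univ
        (fun j => ∏ i ∈ Finset.univ.erase j, (1 - x i / x j) ^ Function.update a k (a k - 1) j)
        (Finset.mem_univ k),
      ← Finset.mul_prod_erase Finset.univ
        (fun j => ∏ i ∈ Finset.univ.erase j, (1 - x i / x j) ^ a j) (Finset.mem_univ k),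
      mul_right_comm]
    refine congrArg₂ (· * ·) ?_ ?_
    · rw [← Finset.prod_mul_distrib]
      refine Finset.prod_congr rfl fun i hi => ?_
      have hik : i ≠ k := Finset.ne_of_mem_erase hi
      have h1 : 1 - x i / x k ≠ 0 := by
        intro h
        exact hik (hx ((div_eq_one_iff_eq (hx0 k)).1 (sub_eq_zero.1 h).symm))
      rw [Function.update_self, pow_sub₀ _ h1 (ha k), pow_one]
    · refine Finset.prod_congr rfl fun j hj => ?_
      rw [Function.update_of_ne (Finset.ne_of_mem_erase hj)]
  simp only [key]
  rw [← Finset.mul_sum, good_sum_eq_one hn x hx0 hx, mul_one]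
end

section
/- For every positive integer n, integers b_1, …, b_n, and positive integers a_1, …, a_n, the constant terms satisfy the recursion c_n(a; b) = Σ_{i=1}^n c_n(⟨a_1, …, a_{i−1}, a_i − 1, a_{i+1}, …, a_n⟩; b). -/
theorem dyson_aux_factor (n : ℕ) (a : Fin n → ℕ) (ha : ∀ i, 1 ≤ a i) (i : Fin n) :
    dysonPoly n a = (∏ k ∈ Finset.univ.erase i, (MvPolynomial.X i - MvPolynomial.X k))
      * dysonPoly n (Function.update a i (a i - 1)) := by
  unfold dysonPoly
  rw [← Finset.mul_prod_erase Finset.univ _ (Finset.mem_univ i),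
    ← Finset.mul_prod_erase Finset.univ (fun j => ∏ k ∈ Finset.univ.erase j,
      (MvPolynomial.X j - MvPolynomial.X k) ^ (Function.update a i (a i - 1) j)) (Finset.mem_univ i),
    ← mul_assoc]
  congr 1
  · rw [← Finset.prod_mul_distrib]
    refine Finset.prod_congr rfl fun k _ => ?_
    rw [Function.update_self, ← pow_succ', Nat.sub_add_cancel (ha i)]
  · refine Finset.prod_congr rfl fun j hj => ?_
    rw [Function.update_of_ne (Finset.ne_of_mem_erase hj)]

theorem dyson_aux_sum (n : ℕ) (hn : 0 < n) (a : Fin n → ℕ) (ha : ∀ i, 1 ≤ a i) :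
    dysonPoly n a = ∑ i : Fin n, MvPolynomial.X i ^ (n - 1)
      * dysonPoly n (Function.update a i (a i - 1)) := by
  let R := MvPolynomial (Fin n) ℤ
  let K := FractionRing R
  have hinj : Function.Injective (algebraMap R K) := IsFractionRing.injective R K
  let v : Fin n → K := fun i => algebraMap R K (MvPolynomial.X i)
  have hv : Function.Injective v := hinj.comp (MvPolynomial.X_injective)
  apply hinj
  have hcard : (Finset.univ : Finset (Fin n)).card = (Polynomial.X ^ (n-1) : Polynomial K).degree + 1 := by
    rw [Polynomial.degree_X_pow, Finset.card_fin]
    norm_cast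
    omega
  have key := Lagrange.leadingCoeff_eq_sum (s := Finset.univ) (v := v) hv.injOn hcard
  rw [Polynomial.leadingCoeff_X_pow] at key
  rw [← one_mul (algebraMap R K (dysonPoly n a)), key, Finset.sum_mul, map_sum]
  refine Finset.sum_congr rfl fun i _ => ?_
  have hne : ∏ k ∈ Finset.univ.erase i, (v i - v k) ≠ 0 := by
    rw [Finset.prod_ne_zero_iff]
    intro k hk
    exact sub_ne_zero.2 fun h => Finset.ne_of_mem_erase hk (hv h).symm
  have e : algebraMap R K (dysonPoly n a) = (∏ k ∈ Finset.univ.erase i, (v i - v k)) *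
      algebraMap R K (dysonPoly n (Function.update a i (a i - 1))) := by
    rw [dyson_aux_factor n a ha i, map_mul, map_prod]
    simp only [map_sub, v]
  rw [e, map_mul, map_pow, Polynomial.eval_pow, Polynomial.eval_X]
  rw [← mul_assoc, div_mul_cancel₀ _ hne]

theorem dysonCT_recursion (n : ℕ) (hn : 0 < n) (b : Fin n → ℤ) (a : Fin n → ℕ)
    (ha : ∀ i, 1 ≤ a i) :
    dysonCT n a b
      = ∑ i : Fin n, dysonCT n (Function.update a i (a i - 1)) b := by
  have hcast : ∀ i, ((a i - 1 : ℕ) : ℤ) = (a i : ℤ) - 1 := fun i => by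
    have := ha i
    omega
  have hn1 : ((n - 1 : ℕ) : ℤ) = (n : ℤ) - 1 := by omega
  have hval : ∀ i j, ((n : ℤ) - 1) * (Function.update a i (a i - 1) j : ℕ) + b j
      = ((n : ℤ) - 1) * a j + b j - (if j = i then ((n - 1 : ℕ) : ℤ) else 0) := by
    intro i j
    by_cases h : j = i
    · subst h
      rw [Function.update_self, hcast, if_pos rfl, hn1]
      ring
    · rw [Function.update_of_ne h, if_neg h, sub_zero]
  unfold dysonCT
  simp only [hval]
  generalize hm : (fun j => ((n : ℤ) - 1) * a j + b j) = m
  have hm' : ∀ j, ((n : ℤ) - 1) * a j + b j = m j := fun j => congrFun hm j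
  simp only [hm']
  by_cases h0 : ∀ j, 0 ≤ m j
  · rw [if_pos h0, dyson_aux_sum n hn a ha, MvPolynomial.coeff_sum]
    refine Finset.sum_congr rfl fun i _ => ?_
    rw [MvPolynomial.X_pow_eq_monomial, MvPolynomial.coeff_monomial_mul']
    have hiff : (Finsupp.single i (n - 1) ≤ Finsupp.equivFunOnFinite.symm fun j => (m j).toNat) ↔
        ∀ j, 0 ≤ m j - (if j = i then ((n - 1 : ℕ) : ℤ) else 0) := by
      rw [Finsupp.le_def]
      refine forall_congr' fun j => ?_
      have := h0 j
      rw [Finsupp.single_apply, Finsupp.equivFunOnFinite_symm_apply_apply]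
      by_cases h : j = i
      · rw [if_pos h.symm, if_pos h]
        omega
      · rw [if_neg (Ne.symm h), if_neg h]
        omega
    simp only [hiff, one_mul]
    congr 2
    ext j
    have := h0 j
    rw [Finsupp.tsub_apply, Finsupp.single_apply, Finsupp.equivFunOnFinite_symm_apply_apply,
      Finsupp.equivFunOnFinite_symm_apply_apply]
    by_cases h : j = i
    · rw [if_pos h.symm, if_pos h]
      omega
    · rw [if_neg (Ne.symm h), if_neg h]
      omega
  · rw [if_neg h0]
    symm
    refine Finset.sum_eq_zero fun i _ => if_neg fun h => h0 fun j => ?_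
    have := h j
    split_ifs at this <;> omega
end

section
/- For all nonnegative integers a_1, a_2, a_3, the constant term c_3(⟨a_1, a_2, a_3⟩; ⟨2, −1, −1⟩) — that is, the coefficient of x_1^2 x_2^{−1} x_3^{−1} in ∏_{1≤i≠j≤3} (1 − x_i/x_j)^{a_j} — satisfies (1 + a_1 + a_2)(1 + a_1 + a_3)(1 + a_1) · a_1! a_2! a_3! · c_3(⟨a_1, a_2, a_3⟩; ⟨2, −1, −1⟩) = a_2 a_3 (2 + 2a_1 + a_2 + a_3) (a_1 + a_2 + a_3)!. -/
namespace DysonAux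
open MvPolynomial

/-- Exponent vector of three variables. -/
noncomputable def E (k u v : ℕ) : Fin 3 →₀ ℕ := Finsupp.equivFunOnFinite.symm ![k, u, v]

/-- The three-variable Dyson polynomial. -/
noncomputable def P (a b c : ℕ) : MvPolynomial (Fin 3) ℤ :=
  (X 0 - X 1) ^ a * (X 0 - X 2) ^ a * ((X 1 - X 0) ^ b * (X 1 - X 2) ^ b) *
    ((X 2 - X 0) ^ c * (X 2 - X 1) ^ c)

lemma dysonPoly_eq (a b c : ℕ) : dysonPoly 3 ![a, b, c] = P a b c := by
  unfold dysonPoly P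
  rw [Fin.prod_univ_three]
  rw [show (Finset.univ.erase (0 : Fin 3)) = {1, 2} by decide,
    show (Finset.univ.erase (1 : Fin 3)) = {0, 2} by decide,
    show (Finset.univ.erase (2 : Fin 3)) = {0, 1} by decide]
  rw [Finset.prod_pair (by decide), Finset.prod_pair (by decide), Finset.prod_pair (by decide)]
  simp

lemma E_inj {k u v k' u' v' : ℕ} : E k u v = E k' u' v' ↔ k = k' ∧ u = u' ∧ v = v' := by
  unfold E
  rw [Equiv.apply_eq_iff_eq]
  constructor
  · intro h
    exact ⟨by simpa using congrFun h 0, by simpa using congrFun h 1, by simpa using congrFun h 2⟩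
  · rintro ⟨rfl, rfl, rfl⟩; rfl

lemma E_le {k u v k' u' v' : ℕ} : E k u v ≤ E k' u' v' ↔ k ≤ k' ∧ u ≤ u' ∧ v ≤ v' := by
  rw [← Finsupp.coe_le_coe, Pi.le_def]
  simp [E, Fin.forall_fin_succ]

lemma E_sub {k u v k' u' v' : ℕ} : E k u v - E k' u' v' = E (k - k') (u - u') (v - v') := by
  ext i; fin_cases i <;> simp [E]

lemma mono (k u v : ℕ) (r : ℤ) :
    monomial (E k u v) r = C r * ((X 0 ^ k * X 1 ^ u * X 2 ^ v : MvPolynomial (Fin 3) ℤ)) := by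
  rw [monomial_eq, Finsupp.prod_fintype _ _ (by simp), Fin.prod_univ_three]
  simp [E]

lemma coeff_mono (k u v k' u' v' : ℕ) (p : MvPolynomial (Fin 3) ℤ) :
    coeff (E k u v) ((X 0 ^ k' * X 1 ^ u' * X 2 ^ v') * p) =
      if k' ≤ k ∧ u' ≤ u ∧ v' ≤ v then coeff (E (k - k') (u - u') (v - v')) p else 0 := by
  have h := mono k' u' v' 1
  rw [C_1, one_mul] at h
  rw [← h, coeff_monomial_mul', E_sub]
  simp [E_le]

lemma ct_eq (a b c : ℕ) : dysonCT 3 ![a, b + 1, c + 1] ![2, -1, -1] =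
    coeff (E (2 * a + 2) (2 * b + 1) (2 * c + 1)) (P a (b + 1) (c + 1)) := by
  unfold dysonCT
  rw [if_pos, dysonPoly_eq]
  · congr 1
    ext i; fin_cases i <;> simp [E] <;> omega
  · intro j; fin_cases j <;> simp <;> omega

lemma ct_zero_b (a c : ℕ) : dysonCT 3 ![a, 0, c] ![2, -1, -1] = 0 := by
  unfold dysonCT
  rw [if_neg]
  intro h
  simpa using h 1

lemma ct_zero_c (a b : ℕ) : dysonCT 3 ![a, b, 0] ![2, -1, -1] = 0 := by
  unfold dysonCT
  rw [if_neg]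
  intro h
  simpa using h 2

lemma P_rec (a b c : ℕ) : P (a + 1) (b + 1) (c + 1) =
    (X 0 ^ 2 * X 1 ^ 0 * X 2 ^ 0) * P a (b + 1) (c + 1)
    + (X 0 ^ 0 * X 1 ^ 2 * X 2 ^ 0) * P (a + 1) b (c + 1)
    + (X 0 ^ 0 * X 1 ^ 0 * X 2 ^ 2) * P (a + 1) (b + 1) c := by
  simp only [P]; ring

lemma ct_rec (a b c : ℕ) : dysonCT 3 ![a + 1, b + 1, c + 1] ![2, -1, -1] =
    dysonCT 3 ![a, b + 1, c + 1] ![2, -1, -1]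
    + dysonCT 3 ![a + 1, b, c + 1] ![2, -1, -1]
    + dysonCT 3 ![a + 1, b + 1, c] ![2, -1, -1] := by
  rw [ct_eq, P_rec, coeff_add, coeff_add, coeff_mono, coeff_mono, coeff_mono, ct_eq]
  congr 1
  · congr 1
    · cases b with
      | zero => rw [ct_zero_b, if_neg (by omega)]
      | succ b => rw [ct_eq, if_pos (by omega)]; congr 1
  · cases c with
    | zero => rw [ct_zero_c, if_neg (by omega)]
    | succ c => rw [ct_eq, if_pos (by omega)]; congr 1

lemma trunc (a : ℕ) (x y : MvPolynomial (Fin 3) ℤ) : ∃ q, y ^ 2 * (y - x) ^ a =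
    y ^ (a + 2) - a * x * y ^ (a + 1) + (a.choose 2 : ℕ) * x ^ 2 * y ^ a + x ^ 3 * q := by
  induction a with
  | zero => exact ⟨0, by simp⟩
  | succ a ih =>
    obtain ⟨q, hq⟩ := ih
    refine ⟨q * (y - x) - (a.choose 2 : ℕ) * y ^ a, ?_⟩
    rw [pow_succ (y - x), ← mul_assoc, hq, Nat.choose_succ_succ' a 1, Nat.choose_one_right]
    push_cast
    ring

lemma binom_sum (n : ℕ) : (X 1 - X 2 : MvPolynomial (Fin 3) ℤ) ^ n =
      ∑ m ∈ Finset.range (n + 1), monomial (E 0 m (n - m)) ((-1) ^ (n - m) * (n.choose m : ℤ)) := by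
  rw [sub_eq_add_neg, add_pow]
  refine Finset.sum_congr rfl fun m _ => ?_
  rw [mono, neg_pow]
  simp
  ring

lemma coeff_binom (n k i j : ℕ) (h : i + j = n) :
    coeff (E k i j) ((X 1 - X 2 : MvPolynomial (Fin 3) ℤ) ^ n) =
      if k = 0 then (-1) ^ j * (n.choose i : ℤ) else 0 := by
  rw [binom_sum, coeff_sum]
  simp only [coeff_monomial, E_inj]
  rw [Finset.sum_eq_single i]
  · have : n - i = j := by omega
    simp [this, eq_comm]
  · intro m _ hm
    rw [if_neg (by tauto)]
  · intro hi; simp at hi; omega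

lemma coeff_binom_ne (n k i j : ℕ) (h : k ≠ 0) :
    coeff (E k i j) ((X 1 - X 2 : MvPolynomial (Fin 3) ℤ) ^ n) = 0 := by
  rw [binom_sum, coeff_sum]
  simp only [coeff_monomial, E_inj]
  refine Finset.sum_eq_zero fun m _ => ?_
  rw [if_neg]
  rintro ⟨hk, -⟩
  exact h hk.symm

lemma base (b c : ℕ) : dysonCT 3 ![0, b + 1, c + 1] ![2, -1, -1] =
    (b + 1) * (c + 1) * ((b + c + 2).choose (b + 1) : ℤ)
    - ((b + 1).choose 2 : ℤ) * ((b + c + 2).choose (b + 2) : ℤ)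
    - ((c + 1).choose 2 : ℤ) * ((b + c + 2).choose b : ℤ) := by
  have h0 := coeff_mono 2 (2 * b + 3) (2 * c + 3) 0 2 2 (P 0 (b + 1) (c + 1))
  rw [if_pos (by omega)] at h0
  rw [ct_eq]
  refine Eq.trans h0.symm ?_
  obtain ⟨q, hq⟩ := trunc (b + 1) (X 0) (X 1)
  obtain ⟨r, hr⟩ := trunc (c + 1) (X 0) (X 2)
  have key : ∃ s : MvPolynomial (Fin 3) ℤ, (X 0 ^ 0 * X 1 ^ 2 * X 2 ^ 2) * P 0 (b + 1) (c + 1) =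
      (X 0 ^ 0 * X 1 ^ (b + 3) * X 2 ^ (c + 3)) * (C ((-1) ^ (c + 1)) * (X 1 - X 2) ^ (b + c + 2))
      + (X 0 ^ 1 * X 1 ^ (b + 2) * X 2 ^ (c + 3)) *
        (C (-(-1 : ℤ) ^ (c + 1) * (b + 1)) * (X 1 - X 2) ^ (b + c + 2))
      + (X 0 ^ 1 * X 1 ^ (b + 3) * X 2 ^ (c + 2)) *
        (C (-(-1 : ℤ) ^ (c + 1) * (c + 1)) * (X 1 - X 2) ^ (b + c + 2))
      + (X 0 ^ 2 * X 1 ^ (b + 2) * X 2 ^ (c + 2)) *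
        (C ((-1 : ℤ) ^ (c + 1) * ((b + 1) * (c + 1))) * (X 1 - X 2) ^ (b + c + 2))
      + (X 0 ^ 2 * X 1 ^ (b + 1) * X 2 ^ (c + 3)) *
        (C ((-1 : ℤ) ^ (c + 1) * ((b + 1).choose 2 : ℤ)) * (X 1 - X 2) ^ (b + c + 2))
      + (X 0 ^ 2 * X 1 ^ (b + 3) * X 2 ^ (c + 1)) *
        (C ((-1 : ℤ) ^ (c + 1) * ((c + 1).choose 2 : ℤ)) * (X 1 - X 2) ^ (b + c + 2))
      + (X 0 ^ 3 * X 1 ^ 0 * X 2 ^ 0) * s := by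
    have e : (X 0 ^ 0 * X 1 ^ 2 * X 2 ^ 2) * P 0 (b + 1) (c + 1) =
        (X 1 ^ 2 * (X 1 - X 0) ^ (b + 1)) * (X 2 ^ 2 * (X 2 - X 0) ^ (c + 1)) *
          ((-1) ^ (c + 1) * (X 1 - X 2) ^ (b + c + 2)) := by
      have : (X 2 - X 1 : MvPolynomial (Fin 3) ℤ) = (-1) * (X 1 - X 2) := by ring
      rw [P, this, mul_pow (-1)]
      ring
    rw [e, hq, hr]
    simp only [map_mul, map_pow, map_neg, map_add, map_one, map_natCast]
    generalize (((b + 1).choose 2 : ℕ) : MvPolynomial (Fin 3) ℤ) = B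
    generalize (((c + 1).choose 2 : ℕ) : MvPolynomial (Fin 3) ℤ) = D
    generalize (-1 : MvPolynomial (Fin 3) ℤ) ^ (c + 1) = S
    generalize (X 1 - X 2 : MvPolynomial (Fin 3) ℤ) ^ (b + c + 2) = T
    push_cast
    generalize (X 0 : MvPolynomial (Fin 3) ℤ) = x
    generalize (X 1 : MvPolynomial (Fin 3) ℤ) = y
    generalize (X 2 : MvPolynomial (Fin 3) ℤ) = z
    refine ⟨S * T * (q * (z ^ (c + 3) - (c + 1) * x * z ^ (c + 2) + D * x ^ 2 * z ^ (c + 1) + x ^ 3 * r)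
      + r * (y ^ (b + 3) - (b + 1) * x * y ^ (b + 2) + B * x ^ 2 * y ^ (b + 1))
      - (b + 1) * D * y ^ (b + 2) * z ^ (c + 1) - (c + 1) * B * y ^ (b + 1) * z ^ (c + 2)
      + x * B * D * y ^ (b + 1) * z ^ (c + 1)), ?_⟩
    ring
  obtain ⟨s, hs⟩ := key
  rw [hs]
  simp only [coeff_add, coeff_mono, coeff_C_mul]
  rw [coeff_binom_ne _ (2 - 0) _ _ (by omega), coeff_binom_ne _ (2 - 1) _ _ (by omega),
    coeff_binom_ne _ (2 - 1) _ _ (by omega)]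
  rw [show 2 * b + 3 - (b + 2) = b + 1 by omega, show 2 * b + 3 - (b + 1) = b + 2 by omega,
    show 2 * b + 3 - (b + 3) = b by omega, show 2 * c + 3 - (c + 2) = c + 1 by omega,
    show 2 * c + 3 - (c + 1) = c + 2 by omega, show 2 * c + 3 - (c + 3) = c by omega]
  rw [coeff_binom _ (2 - 2) (b + 1) (c + 1) (by omega),
    coeff_binom _ (2 - 2) (b + 2) c (by omega), coeff_binom _ (2 - 2) b (c + 2) (by omega)]
  have l1 : b + 2 ≤ 2 * b + 3 := by omega
  have l2 : b + 1 ≤ 2 * b + 3 := by omega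
  have l3 : b + 3 ≤ 2 * b + 3 := by omega
  have l4 : c + 2 ≤ 2 * c + 3 := by omega
  have l5 : c + 1 ≤ 2 * c + 3 := by omega
  have l6 : c + 3 ≤ 2 * c + 3 := by omega
  simp only [l1, l2, l3, l4, l5, l6, le_refl, and_self, if_true, Nat.sub_self,
    show ¬ (3 ≤ 2) by omega, false_and, if_false, mul_zero, ite_self, zero_add, add_zero]
  have hs2 : ((-1 : ℤ) ^ c) * (-1) ^ c = 1 := by
    rw [← mul_pow]; simp
  simp only [pow_succ]
  linear_combination ((b + 1) * (c + 1) * ((b + c + 2).choose (b + 1) : ℤ)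
    - ((b + 1).choose 2 : ℤ) * ((b + c + 2).choose (b + 2) : ℤ)
    - ((c + 1).choose 2 : ℤ) * ((b + c + 2).choose b : ℤ)) * hs2

theorem main_s6 (n : ℕ) : ∀ a b c : ℕ, a + b + c = n →
    (dysonCT 3 ![a, b, c] ![2, -1, -1] : ℚ) =
      b * c * (2 + 2 * a + b + c) * (a + b + c).factorial /
       ((1 + a + b) * (1 + a + c) * (1 + a) * a.factorial * b.factorial * c.factorial) := by
  induction n with
  | zero =>
    intro a b c h
    obtain rfl : b = 0 := by omega
    rw [ct_zero_b]; simp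
  | succ n ih =>
    intro a b c h
    rcases b with _ | b
    · rw [ct_zero_b]; simp
    rcases c with _ | c
    · rw [ct_zero_c]; simp
    rcases a with _ | a
    · rw [base]
      have c0 := Nat.add_choose_mul_factorial_mul_factorial (b + 1) (c + 1)
      rw [← Nat.choose_symm_add] at c0
      have c1 := Nat.add_choose_mul_factorial_mul_factorial (b + 2) c
      rw [← Nat.choose_symm_add] at c1
      have c2 := Nat.add_choose_mul_factorial_mul_factorial b (c + 2)
      rw [← Nat.choose_symm_add] at c2
      rw [show b + 1 + (c + 1) = b + c + 2 by ring] at c0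
      rw [show b + 2 + c = b + c + 2 by ring] at c1
      rw [show b + (c + 2) = b + c + 2 by ring] at c2
      rw [show 0 + (b + 1) + (c + 1) = b + c + 2 by ring]
      have d1 : (((b + 1).choose 2 : ℕ) : ℚ) = (b + 1) * b / 2 := by
        rw [Nat.cast_choose_two]; push_cast; ring
      have d2 : (((c + 1).choose 2 : ℕ) : ℚ) = (c + 1) * c / 2 := by
        rw [Nat.cast_choose_two]; push_cast; ring
      have hb : (b.factorial : ℚ) ≠ 0 := by positivity
      have hc : (c.factorial : ℚ) ≠ 0 := by positivity
      simp only [Nat.factorial_succ b, Nat.factorial_succ c, Nat.factorial_succ (b + 1),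
        Nat.factorial_succ (c + 1)] at c0 c1 c2 ⊢
      generalize (b + c + 2).factorial = N at *
      have c0' : ((b + c + 2).choose (b + 1) : ℚ) =
          N / ((b + 1) * b.factorial * ((c + 1) * c.factorial)) := by
        rw [← c0]; push_cast; field_simp
      have c1' : ((b + c + 2).choose (b + 2) : ℚ) =
          N / ((b + 2) * ((b + 1) * b.factorial) * c.factorial) := by
        rw [← c1]; push_cast; field_simp; ring
      have c2' : ((b + c + 2).choose b : ℚ) =
          N / (b.factorial * ((c + 2) * ((c + 1) * c.factorial))) := by
        rw [← c2]; push_cast; field_simp; ring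
      push_cast
      rw [c0', c1', c2', d1, d2]
      have h1 : (1 + 0 + ((b : ℚ) + 1)) ≠ 0 := by positivity
      have h2 : (1 + 0 + ((c : ℚ) + 1)) ≠ 0 := by positivity
      simp only [Nat.factorial_zero, Nat.cast_one]
      field_simp
      ring
    · rw [ct_rec]
      push_cast
      rw [ih a (b + 1) (c + 1) (by omega), ih (a + 1) b (c + 1) (by omega),
        ih (a + 1) (b + 1) c (by omega)]
      have ha : (a.factorial : ℚ) ≠ 0 := by positivity
      have hb : (b.factorial : ℚ) ≠ 0 := by positivity
      have hc : (c.factorial : ℚ) ≠ 0 := by positivity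
      rw [show a + 1 + (b + 1) + (c + 1) = (a + b + c + 2) + 1 by ring,
        show a + (b + 1) + (c + 1) = a + b + c + 2 by ring,
        show a + 1 + b + (c + 1) = a + b + c + 2 by ring,
        show a + 1 + (b + 1) + c = a + b + c + 2 by ring]
      simp only [Nat.factorial_succ a, Nat.factorial_succ b, Nat.factorial_succ c,
        Nat.factorial_succ (a + b + c + 2)]
      generalize (a + b + c + 2).factorial = N
      push_cast
      have h1 : (1 + (a : ℚ) + (b + 1)) ≠ 0 := by positivity
      have h2 : (1 + (a : ℚ) + (c + 1)) ≠ 0 := by positivity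
      have h3 : (1 + ((a : ℚ) + 1) + (b + 1)) ≠ 0 := by positivity
      have h4 : (1 + ((a : ℚ) + 1) + (c + 1)) ≠ 0 := by positivity
      have h5 : (1 + ((a : ℚ) + 1) + b) ≠ 0 := by positivity
      have h6 : (1 + ((a : ℚ) + 1) + c) ≠ 0 := by positivity
      have h7 : (1 + (a : ℚ)) ≠ 0 := by positivity
      have h8 : (1 + ((a : ℚ) + 1)) ≠ 0 := by positivity
      field_simp
      ring

end DysonAux

/-- Closed form for `c_3(⟨a_1, a_2, a_3⟩; ⟨2, -1, -1⟩)`: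
`(1+a_1+a_2)(1+a_1+a_3)(1+a_1) a_1! a_2! a_3! · c_3 = a_2 a_3 (2+2a_1+a_2+a_3) (a_1+a_2+a_3)!`. -/
theorem dysonCT_three_two_neg_one_neg_one (a₁ a₂ a₃ : ℕ) :
    (1 + (a₁ : ℤ) + a₂) * (1 + (a₁ : ℤ) + a₃) * (1 + (a₁ : ℤ)) *
        (a₁.factorial : ℤ) * (a₂.factorial : ℤ) * (a₃.factorial : ℤ) *
        dysonCT 3 ![a₁, a₂, a₃] ![2, -1, -1]
      = (a₂ : ℤ) * (a₃ : ℤ) * (2 + 2 * (a₁ : ℤ) + a₂ + a₃) *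
          ((a₁ + a₂ + a₃).factorial : ℤ) := by
  have h := DysonAux.main_s6 _ a₁ a₂ a₃ rfl
  rw [eq_div_iff (by positivity)] at h
  qify
  linear_combination h
end

section
/- For all nonnegative integers a_2, a_3, the boundary identity c_3(⟨0, a_2, a_3⟩; ⟨2, −1, −1⟩) = (a_3(a_3 − 1)/2) · c_2(⟨a_2, a_3⟩; ⟨−1, 1⟩) + (a_2(a_2 − 1)/2) · c_2(⟨a_2, a_3⟩; ⟨1, −1⟩) + a_2 a_3 · c_2(⟨a_2, a_3⟩; ⟨0, 0⟩) holds. -/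
/-- coefficients of `(u - X)^n`. -/
lemma coeff_C_sub_X_pow' {R : Type*} [CommRing R] (u : R) (n k : ℕ) :
    ((Polynomial.C u - Polynomial.X) ^ n).coeff k = (-1) ^ k * u ^ (n - k) * (n.choose k : R) := by
  have h : (Polynomial.C u - Polynomial.X) = -(Polynomial.X - Polynomial.C u) := by ring
  rw [h, neg_pow]
  have h2 : ((-1 : Polynomial R) ^ n) = Polynomial.C ((-1) ^ n) := by simp
  rw [h2, Polynomial.coeff_C_mul, sub_eq_add_neg, ← Polynomial.C_neg,
    Polynomial.coeff_X_add_C_pow]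
  rcases le_or_gt k n with hk | hk
  · obtain ⟨m, rfl⟩ := Nat.exists_eq_add_of_le hk
    rw [Nat.add_sub_cancel_left, neg_pow u, pow_add]
    have : ((-1 : R) ^ m) * (-1) ^ m = 1 := by rw [← mul_pow]; simp
    linear_combination ((-1 : R) ^ k * u ^ m * ((k + m).choose k : R)) * this
  · simp [Nat.choose_eq_zero_of_lt hk]

lemma dysonPoly_two (a b : ℕ) : dysonPoly 2 ![a, b] =
    (MvPolynomial.X 0 - MvPolynomial.X 1) ^ a * (MvPolynomial.X 1 - MvPolynomial.X 0) ^ b := by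
  have h0 : (Finset.univ.erase (0 : Fin 2)) = {1} := by decide
  have h1 : (Finset.univ.erase (1 : Fin 2)) = {0} := by decide
  simp [dysonPoly, Fin.prod_univ_two, h0, h1]

lemma dysonPoly_three (a b : ℕ) : MvPolynomial.finSuccEquiv ℤ 2 (dysonPoly 3 ![0, a, b]) =
    (Polynomial.C (MvPolynomial.X 0) - Polynomial.X) ^ a
      * (Polynomial.C (MvPolynomial.X 1) - Polynomial.X) ^ b
      * Polynomial.C (dysonPoly 2 ![a, b]) := by
  have h1 : (Finset.univ.erase (1 : Fin 3)) = {0, 2} := by decide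
  have h2 : (Finset.univ.erase (2 : Fin 3)) = {0, 1} := by decide
  have e1 : MvPolynomial.finSuccEquiv ℤ 2 (MvPolynomial.X 1)
      = Polynomial.C (MvPolynomial.X 0) := MvPolynomial.finSuccEquiv_X_succ (j := 0)
  have e2 : MvPolynomial.finSuccEquiv ℤ 2 (MvPolynomial.X 2)
      = Polynomial.C (MvPolynomial.X 1) := MvPolynomial.finSuccEquiv_X_succ (j := 1)
  rw [dysonPoly_two]
  simp [dysonPoly, Fin.prod_univ_three, h1, h2, e1, e2, MvPolynomial.finSuccEquiv_X_zero]
  ring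

/-- Exponent vector on two variables. -/
noncomputable def ex2 (p q : ℕ) : Fin 2 →₀ ℕ := Finsupp.equivFunOnFinite.symm ![p, q]

lemma coeff_ex2 (p q r s : ℕ) (c : ℤ) (G : MvPolynomial (Fin 2) ℤ) :
    MvPolynomial.coeff (ex2 (p + r) (q + s))
      (MvPolynomial.C c * (MvPolynomial.X 0 ^ p * MvPolynomial.X 1 ^ q) * G)
      = c * MvPolynomial.coeff (ex2 r s) G := by
  have h : MvPolynomial.C c * (MvPolynomial.X 0 ^ p * MvPolynomial.X 1 ^ q)
      = MvPolynomial.monomial (ex2 p q) c := by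
    rw [MvPolynomial.monomial_eq, Finsupp.prod_fintype _ _ (by simp), Fin.prod_univ_two]
    rfl
  have h' : ex2 (p + r) (q + s) = ex2 p q + ex2 r s := by
    ext i; fin_cases i <;> rfl
  rw [h, h', MvPolynomial.coeff_monomial_mul]

lemma ct_two (a b : ℕ) (c : Fin 2 → ℤ) (r s : ℕ) (hr : (a : ℤ) + c 0 = r) (hs : (b : ℤ) + c 1 = s) :
    dysonCT 2 ![a, b] c = MvPolynomial.coeff (ex2 r s) (dysonPoly 2 ![a, b]) := by
  have h : ∀ j, 0 ≤ (((2 : ℕ) : ℤ) - 1) * ((![a, b] : Fin 2 → ℕ) j : ℤ) + c j := by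
    intro j; fin_cases j <;> simp <;> omega
  rw [dysonCT, if_pos h]
  congr 1
  ext j
  fin_cases j <;> simp [ex2] <;> omega

lemma ct_three (a b : ℕ) : dysonCT 3 ![0, a + 1, b + 1] ![2, -1, -1]
    = MvPolynomial.coeff (ex2 (2 * a + 1) (2 * b + 1))
      (((MvPolynomial.finSuccEquiv ℤ 2 (dysonPoly 3 ![0, a + 1, b + 1]))).coeff 2) := by
  rw [MvPolynomial.finSuccEquiv_coeff_coeff]
  have h : ∀ j, 0 ≤ (((3 : ℕ) : ℤ) - 1) * ((![0, a + 1, b + 1] : Fin 3 → ℕ) j : ℤ)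
      + (![2, -1, -1] : Fin 3 → ℤ) j := by
    intro j; fin_cases j <;> simp <;> omega
  rw [dysonCT, if_pos h]
  congr 1
  ext j
  refine Fin.cases ?_ (fun j => ?_) j
  · simp
  · rw [Finsupp.cons_succ]
    fin_cases j <;> simp [ex2] <;> omega

/-- Boundary identity:
`c_3(⟨0, a_2, a_3⟩; ⟨2, -1, -1⟩) = (a_3(a_3-1)/2) c_2(⟨a_2, a_3⟩; ⟨-1, 1⟩)
  + (a_2(a_2-1)/2) c_2(⟨a_2, a_3⟩; ⟨1, -1⟩) + a_2 a_3 c_2(⟨a_2, a_3⟩; ⟨0, 0⟩)`. -/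
theorem dysonCT_three_boundary (a₂ a₃ : ℕ) :
    dysonCT 3 ![0, a₂, a₃] ![2, -1, -1]
      = ((a₃ * (a₃ - 1) / 2 : ℕ) : ℤ) * dysonCT 2 ![a₂, a₃] ![-1, 1]
        + ((a₂ * (a₂ - 1) / 2 : ℕ) : ℤ) * dysonCT 2 ![a₂, a₃] ![1, -1]
        + (a₂ : ℤ) * (a₃ : ℤ) * dysonCT 2 ![a₂, a₃] ![0, 0] := by
  rcases a₂ with _ | a
  · have h1 : dysonCT 3 ![0, 0, a₃] ![2, -1, -1] = 0 := by
      rw [dysonCT, if_neg]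
      intro h; have := h 1; simp at this
    have h2 : dysonCT 2 ![0, a₃] ![-1, 1] = 0 := by
      rw [dysonCT, if_neg]
      intro h; have := h 0; simp at this
    simp [h1, h2]
  rcases a₃ with _ | b
  · have h1 : dysonCT 3 ![0, a + 1, 0] ![2, -1, -1] = 0 := by
      rw [dysonCT, if_neg]
      intro h; have := h 2; simp at this
    have h2 : dysonCT 2 ![a + 1, 0] ![1, -1] = 0 := by
      rw [dysonCT, if_neg]
      intro h; have := h 1; simp at this
    simp [h1, h2]
  rw [ct_three, dysonPoly_three, Polynomial.coeff_mul_C, Polynomial.coeff_mul,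
    ct_two _ _ _ a (b + 2) (by simp) (by simp; ring),
    ct_two _ _ _ (a + 2) b (by simp; ring) (by simp),
    ct_two _ _ _ (a + 1) (b + 1) (by simp) (by simp),
    ← Nat.choose_two_right, ← Nat.choose_two_right]
  generalize dysonPoly 2 ![a + 1, b + 1] = G
  have h : Finset.HasAntidiagonal.antidiagonal (2 : ℕ) = {(0, 2), (1, 1), (2, 0)} := rfl
  rw [h]
  simp only [coeff_C_sub_X_pow']
  rw [Finset.sum_insert (by decide), Finset.sum_insert (by decide), Finset.sum_singleton]
  have k1 := coeff_ex2 (a + 1) (b - 1) a (b + 2) ((b + 1).choose 2 : ℕ) G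
  have k2 := coeff_ex2 a b (a + 1) (b + 1) (((a + 1 : ℕ) : ℤ) * ((b + 1 : ℕ) : ℤ)) G
  have k3 := coeff_ex2 (a - 1) (b + 1) (a + 2) b ((a + 1).choose 2 : ℕ) G
  have l1 : MvPolynomial.coeff (ex2 (2 * a + 1) (2 * b + 1))
      (MvPolynomial.C (((b + 1).choose 2 : ℕ) : ℤ)
        * (MvPolynomial.X 0 ^ (a + 1) * MvPolynomial.X 1 ^ (b - 1)) * G)
      = (((b + 1).choose 2 : ℕ) : ℤ) * MvPolynomial.coeff (ex2 a (b + 2)) G := by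
    rcases b with _ | b
    · simp
    · rw [← k1]; congr 2 <;> omega
  have l3 : MvPolynomial.coeff (ex2 (2 * a + 1) (2 * b + 1))
      (MvPolynomial.C (((a + 1).choose 2 : ℕ) : ℤ)
        * (MvPolynomial.X 0 ^ (a - 1) * MvPolynomial.X 1 ^ (b + 1)) * G)
      = (((a + 1).choose 2 : ℕ) : ℤ) * MvPolynomial.coeff (ex2 (a + 2) b) G := by
    rcases a with _ | a
    · simp
    · rw [← k3]; congr 2 <;> omega
  have e : a + (a + 1) = 2 * a + 1 := by ring
  have e' : b + (b + 1) = 2 * b + 1 := by ring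
  rw [e, e'] at k2
  rw [← l1, ← l3, ← k2, ← MvPolynomial.coeff_add, ← MvPolynomial.coeff_add]
  congr 1
  have s1 : a + 1 - 2 = a - 1 := by omega
  have s2 : b + 1 - 2 = b - 1 := by omega
  simp only [s1, s2, Nat.add_sub_cancel, Nat.sub_zero, Nat.choose_zero_right, Nat.choose_one_right,
    map_mul, map_natCast, Nat.cast_one]
  ring
end

section
/- For all nonnegative integers a_1, a_2, a_3, the constant term c_3(⟨a_1, a_2, a_3⟩; ⟨1, 0, −1⟩) satisfies (1 + a_1 + a_2) · a_1! a_2! a_3! · c_3(⟨a_1, a_2, a_3⟩; ⟨1, 0, −1⟩) = −a_3 · (a_1 + a_2 + a_3)!. -/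
namespace DysonAux

open MvPolynomial

/-- exponent vector -/
noncomputable def ex (i j k : ℕ) : Fin 3 →₀ ℕ :=
  Finsupp.single 0 i + Finsupp.single 1 j + Finsupp.single 2 k

/-- The three variable Dyson polynomial. -/
noncomputable def G (p q r : ℕ) : MvPolynomial (Fin 3) ℤ :=
  ((X 0 - X 1) ^ p * (X 0 - X 2) ^ p) * ((X 1 - X 0) ^ q * (X 1 - X 2) ^ q) *
    ((X 2 - X 0) ^ r * (X 2 - X 1) ^ r)

theorem G_eq (p q r : ℕ) : dysonPoly 3 ![p, q, r] = G p q r := by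
  have h0 : (Finset.univ.erase (0 : Fin 3)) = {1, 2} := by decide
  have h1 : (Finset.univ.erase (1 : Fin 3)) = {0, 2} := by decide
  have h2 : (Finset.univ.erase (2 : Fin 3)) = {0, 1} := by decide
  unfold dysonPoly G
  rw [Fin.prod_univ_three, h0, h1, h2]
  simp

theorem coeff_shift (a b c i j k : ℕ) (P : MvPolynomial (Fin 3) ℤ) :
    coeff (ex (i + a) (j + b) (k + c)) (X 0 ^ a * X 1 ^ b * X 2 ^ c * P) = coeff (ex i j k) P := by
  have h : (X 0 ^ a * X 1 ^ b * X 2 ^ c : MvPolynomial (Fin 3) ℤ) = monomial (ex a b c) 1 := by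
    simp only [X_pow_eq_monomial, monomial_mul, ex, mul_one]
  have h2 : ex (i + a) (j + b) (k + c) = ex a b c + ex i j k := by
    simp only [ex, Finsupp.single_add]; abel
  rw [h, h2, coeff_monomial_mul, one_mul]

theorem coeff_vanish (v : Fin 3) (n : ℕ) (d : Fin 3 →₀ ℕ) (hd : d v < n)
    (P : MvPolynomial (Fin 3) ℤ) : coeff d (X v ^ n * P) = 0 := by
  rw [X_pow_eq_monomial, coeff_monomial_mul', if_neg]
  intro h
  have := h v
  simp at this
  omega

theorem ex0 (i j k : ℕ) : ex i j k 0 = i := by simp [ex]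
theorem ex1 (i j k : ℕ) : ex i j k 1 = j := by simp [ex]
theorem ex2 (i j k : ℕ) : ex i j k 2 = k := by simp [ex]

theorem coeff_nodep (w u v : Fin 3) (hu : w ≠ u) (hv : w ≠ v) (N : ℕ) (d : Fin 3 →₀ ℕ)
    (hd : d w ≠ 0) : coeff d ((X u - X v : MvPolynomial (Fin 3) ℤ) ^ N) = 0 := by
  induction N generalizing d with
  | zero =>
    rw [pow_zero, coeff_one, if_neg]
    rintro rfl
    simp at hd
  | succ N ih =>
    rw [pow_succ, mul_sub, coeff_sub, coeff_mul_X', coeff_mul_X']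
    have h1 : (d - Finsupp.single u 1 : Fin 3 →₀ ℕ) w ≠ 0 := by
      simpa [Finsupp.single_apply, hu.symm] using hd
    have h2 : (d - Finsupp.single v 1 : Fin 3 →₀ ℕ) w ≠ 0 := by
      simpa [Finsupp.single_apply, hv.symm] using hd
    rw [ih _ h1, ih _ h2]; simp

theorem coeff_binom_s11 (u v : Fin 3) (huv : u ≠ v) (i k : ℕ) :
    coeff (Finsupp.single u i + Finsupp.single v k)
      ((X u - X v : MvPolynomial (Fin 3) ℤ) ^ (i + k)) = (-1) ^ k * ((i + k).choose k : ℤ) := by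
  obtain ⟨N, hN⟩ : ∃ N, N = i + k := ⟨_, rfl⟩
  rw [← hN]
  induction N generalizing i k with
  | zero =>
    obtain ⟨rfl, rfl⟩ : i = 0 ∧ k = 0 := by omega
    simp
  | succ N ih =>
    rw [pow_succ, mul_sub, coeff_sub]
    have e1 : ∀ i, (Finsupp.single u (i + 1) + Finsupp.single v k : Fin 3 →₀ ℕ) =
        (Finsupp.single u i + Finsupp.single v k) + Finsupp.single u 1 := by
      intro i; rw [Finsupp.single_add]; abel
    have e2 : ∀ k, (Finsupp.single u i + Finsupp.single v (k + 1) : Fin 3 →₀ ℕ) =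
        (Finsupp.single u i + Finsupp.single v k) + Finsupp.single v 1 := by
      intro k; rw [Finsupp.single_add]; abel
    have A : coeff (Finsupp.single u i + Finsupp.single v k)
        ((X u - X v : MvPolynomial (Fin 3) ℤ) ^ N * X u) =
        if i = 0 then 0 else (-1) ^ k * (N.choose k : ℤ) := by
      rcases i with _ | i
      · rw [coeff_mul_X', if_neg] <;> simp [huv, huv.symm, Finsupp.single_apply]
      · rw [e1, coeff_mul_X, ih i k (by omega)]; simp
    have B : coeff (Finsupp.single u i + Finsupp.single v k)
        ((X u - X v : MvPolynomial (Fin 3) ℤ) ^ N * X v) =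
        if k = 0 then 0 else (-1) ^ (k - 1) * (N.choose (k - 1) : ℤ) := by
      rcases k with _ | k
      · rw [coeff_mul_X', if_neg] <;> simp [huv, huv.symm, Finsupp.single_apply]
      · rw [e2, coeff_mul_X, ih i k (by omega)]; simp
    rw [A, B]
    rcases k with _ | k
    · have : i ≠ 0 := by omega
      simp [this]
    · by_cases hi : i = 0
      · have : N = k := by omega
        subst this
        simp [hi, pow_succ]
      · simp only [hi, if_false, Nat.succ_ne_zero, Nat.add_sub_cancel, Nat.choose_succ_succ]
        push_cast
        ring

theorem bd_q (p r : ℕ) : coeff (ex (2 * p + 1) 0 (2 * r + 1)) (G p 0 (r + 1)) =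
    -((p + r + 1).choose r : ℤ) := by
  obtain ⟨A, hA⟩ := sub_dvd_pow_sub_pow (X 0 - X 1 : MvPolynomial (Fin 3) ℤ) (X 0) p
  obtain ⟨B, hB⟩ := sub_dvd_pow_sub_pow (X 2 - X 1 : MvPolynomial (Fin 3) ℤ) (X 2) (r + 1)
  have hA' := eq_add_of_sub_eq hA
  have hB' := eq_add_of_sub_eq hB
  have hs : (X 2 - X 0 : MvPolynomial (Fin 3) ℤ) ^ (r + 1) =
      (-1) ^ (r + 1) * (X 0 - X 2) ^ (r + 1) := by rw [← mul_pow]; ring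
  have key : G p 0 (r + 1) = C ((-1) ^ (r + 1)) *
      (X 0 ^ p * X 1 ^ 0 * X 2 ^ (r + 1) * (X 0 - X 2) ^ (p + 1 + r)) +
      X 1 ^ 1 * ((X 0 - X 2) ^ p * (X 2 - X 0) ^ (r + 1) *
        (-A * X 2 ^ (r + 1) - X 0 ^ p * B + X 1 * A * B)) := by
    unfold G
    rw [hA', hB', hs]
    simp only [map_pow, map_neg, map_one]
    ring
  have h1 := coeff_shift p 0 (r + 1) (p + 1) 0 r ((X 0 - X 2) ^ (p + 1 + r))
  rw [show p + 1 + p = 2 * p + 1 by ring, show r + (r + 1) = 2 * r + 1 by ring] at h1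
  have h2 := coeff_binom_s11 0 2 (by decide) (p + 1) r
  have h3 : ex (p + 1) 0 r = Finsupp.single 0 (p + 1) + Finsupp.single 2 r := by simp [ex]
  rw [key, coeff_add, coeff_vanish 1 1 _ (by rw [ex1]; norm_num), coeff_C_mul]
  rw [← h3] at h2
  simp only [add_zero] at h1
  rw [h1, h2, show p + 1 + r = p + r + 1 by ring, ← mul_assoc, ← pow_add,
    show r + 1 + r = 2 * r + 1 by ring, pow_succ, pow_mul]
  simp

theorem bd_p (q r : ℕ) : coeff (ex 1 (2 * q + 2) (2 * r + 1)) (G 0 (q + 1) (r + 1)) =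
    -((q + r + 2).choose r : ℤ) := by
  obtain ⟨A, hA⟩ := Polynomial.powAddExpansion (X 1 : MvPolynomial (Fin 3) ℤ) (-X 0) (q + 1)
  obtain ⟨B, hB⟩ := Polynomial.powAddExpansion (X 2 : MvPolynomial (Fin 3) ℤ) (-X 0) (r + 1)
  rw [← sub_eq_add_neg, Nat.add_sub_cancel] at hA hB
  have hs : (X 2 - X 1 : MvPolynomial (Fin 3) ℤ) ^ (r + 1) =
      (-1) ^ (r + 1) * (X 1 - X 2) ^ (r + 1) := by rw [← mul_pow]; ring
  have key : ∃ R, G 0 (q + 1) (r + 1) =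
      C ((-1) ^ (r + 1)) *
        (X 0 ^ 0 * X 1 ^ (q + 1) * X 2 ^ (r + 1) * (X 1 - X 2) ^ (q + r + 2)) +
      C ((-1) ^ (r + 1) * (-((q + 1 : ℕ) : ℤ))) *
        (X 0 ^ 1 * X 1 ^ q * X 2 ^ (r + 1) * (X 1 - X 2) ^ (q + r + 2)) +
      C ((-1) ^ (r + 1) * (-((r + 1 : ℕ) : ℤ))) *
        (X 0 ^ 1 * X 1 ^ (q + 1) * X 2 ^ r * (X 1 - X 2) ^ (q + r + 2)) +
      X 0 ^ 2 * R := by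
    refine ⟨(X 1 - X 2) ^ (q + 1) * (X 2 - X 1) ^ (r + 1) *
      (A * (X 2 - X 0) ^ (r + 1) + (X 1 ^ (q + 1) - ((q + 1 : ℕ) : MvPolynomial (Fin 3) ℤ) * X 1 ^ q * X 0) * B +
        ((q + 1 : ℕ) : MvPolynomial (Fin 3) ℤ) * ((r + 1 : ℕ) : MvPolynomial (Fin 3) ℤ)
          * X 1 ^ q * X 2 ^ r), ?_⟩
    unfold G
    rw [hA, hB, hs]
    simp only [map_pow, map_neg, map_one, map_mul, map_natCast]
    ring
  obtain ⟨R, key⟩ := key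
  have h1 := coeff_shift 0 (q + 1) (r + 1) 1 (q + 1) r ((X 1 - X 2) ^ (q + r + 2))
  have h2 := coeff_shift 1 q (r + 1) 0 (q + 2) r ((X 1 - X 2) ^ (q + r + 2))
  have h3 := coeff_shift 1 (q + 1) r 0 (q + 1) (r + 1) ((X 1 - X 2) ^ (q + r + 2))
  rw [show ex (1 + 0) (q + 1 + (q + 1)) (r + (r + 1)) = ex 1 (2 * q + 2) (2 * r + 1) by
    congr 1 <;> ring, coeff_nodep 0 1 2 (by decide) (by decide) _ _ (by simp [ex0])] at h1
  rw [show ex (0 + 1) (q + 2 + q) (r + (r + 1)) = ex 1 (2 * q + 2) (2 * r + 1) by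
    congr 1 <;> ring] at h2
  rw [show ex (0 + 1) (q + 1 + (q + 1)) (r + 1 + r) = ex 1 (2 * q + 2) (2 * r + 1) by
    congr 1 <;> ring] at h3
  have b2 := coeff_binom_s11 1 2 (by decide) (q + 2) r
  have b3 := coeff_binom_s11 1 2 (by decide) (q + 1) (r + 1)
  rw [show Finsupp.single 1 (q + 2) + Finsupp.single 2 r = ex 0 (q + 2) r by simp [ex],
    show q + 2 + r = q + r + 2 by ring] at b2
  rw [show Finsupp.single 1 (q + 1) + Finsupp.single 2 (r + 1) = ex 0 (q + 1) (r + 1) by simp [ex],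
    show q + 1 + (r + 1) = q + r + 2 by ring] at b3
  rw [key, coeff_add, coeff_add, coeff_add, coeff_vanish 0 2 _ (by rw [ex0]; norm_num),
    coeff_C_mul, coeff_C_mul, coeff_C_mul, h1, h2, h3, b2, b3]
  have hc := Nat.choose_succ_right_eq (q + r + 2) r
  rw [show q + r + 2 - r = q + 2 by omega] at hc
  have hc' : ((q + r + 2).choose (r + 1) : ℤ) * (r + 1) = (q + r + 2).choose r * (q + 2) := by
    exact_mod_cast hc
  have hsq : ((-1 : ℤ) ^ r) * (-1) ^ r = 1 := by rw [← mul_pow]; simp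
  push_cast
  rw [pow_succ]
  linear_combination ((q + 1) * ((q + r + 2).choose r : ℤ) -
    (r + 1) * ((q + r + 2).choose (r + 1) : ℤ)) * hsq - hc'

theorem G_rec (p q r : ℕ) : G (p + 1) (q + 1) (r + 1) =
    X 0 ^ 2 * X 1 ^ 0 * X 2 ^ 0 * G p (q + 1) (r + 1) +
    X 0 ^ 0 * X 1 ^ 2 * X 2 ^ 0 * G (p + 1) q (r + 1) + X 2 ^ 2 * G (p + 1) (q + 1) r := by
  unfold G
  simp only [pow_succ (X _ - X _)]
  ring

/-- the target coefficient -/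
noncomputable def f (p q r : ℕ) : ℤ := coeff (ex (2 * p + 1) (2 * q) (2 * r + 1)) (G p q (r + 1))

theorem f_rec (p q r : ℕ) : f (p + 1) (q + 1) r = f p (q + 1) r + f (p + 1) q r +
    coeff (ex (2 * (p + 1) + 1) (2 * (q + 1)) (2 * r + 1)) (X 2 ^ 2 * G (p + 1) (q + 1) r) := by
  unfold f
  rw [G_rec, coeff_add, coeff_add]
  congr 2
  · exact coeff_shift 2 0 0 (2 * p + 1) (2 * (q + 1)) (2 * r + 1) _
  · exact coeff_shift 0 2 0 (2 * (p + 1) + 1) (2 * q) (2 * r + 1) _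

theorem f_rec_zero (p q : ℕ) : f (p + 1) (q + 1) 0 = f p (q + 1) 0 + f (p + 1) q 0 := by
  rw [f_rec, coeff_vanish 2 2 _ (by rw [ex2]; norm_num), add_zero]

theorem f_rec_succ (p q r : ℕ) : f (p + 1) (q + 1) (r + 1) =
    f p (q + 1) (r + 1) + f (p + 1) q (r + 1) + f (p + 1) (q + 1) r := by
  rw [f_rec]
  congr 1
  have := coeff_shift 0 0 2 (2 * (p + 1) + 1) (2 * (q + 1)) (2 * r + 1) (G (p + 1) (q + 1) (r + 1))
  simp only [pow_zero, one_mul] at this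
  exact this

theorem f_eq : ∀ N p q r : ℕ, p + q + r = N →
    f p q r = -(((p + q + 1 + r).choose r : ℤ) * ((p + q).choose p : ℤ)) := by
  intro N
  induction N with
  | zero =>
    intro p q r h
    obtain ⟨rfl, rfl, rfl⟩ : p = 0 ∧ q = 0 ∧ r = 0 := by omega
    have := bd_q 0 0
    simpa [f] using this
  | succ N ih =>
    intro p q r h
    rcases q with _ | q
    · have := bd_q p r
      rw [f, Nat.mul_zero, this, show p + 0 + 1 + r = p + r + 1 by ring]
      simp
    rcases p with _ | p
    · have := bd_p q r
      rw [f, show 2 * (q + 1) = 2 * q + 2 by ring, Nat.mul_zero, Nat.zero_add, this,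
        show 0 + (q + 1) + 1 + r = q + r + 2 by ring]
      simp
    have hp : ((p + 1 + (q + 1)).choose (p + 1) : ℤ) =
        (p + (q + 1)).choose p + (p + 1 + q).choose (p + 1) := by
      rw [show p + 1 + (q + 1) = (p + q + 1) + 1 by ring, Nat.choose_succ_succ,
        show p + (q + 1) = p + q + 1 by ring, show p + 1 + q = p + q + 1 by ring]
      push_cast; ring
    rcases r with _ | r
    · rw [f_rec_zero, ih p (q + 1) 0 (by omega), ih (p + 1) q 0 (by omega), hp]
      simp; ring
    · rw [f_rec_succ, ih p (q + 1) (r + 1) (by omega), ih (p + 1) q (r + 1) (by omega),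
        ih (p + 1) (q + 1) r (by omega), hp]
      rw [show p + 1 + (q + 1) + 1 + (r + 1) = (p + q + r + 3) + 1 by ring,
        Nat.choose_succ_succ, show p + (q + 1) + 1 + (r + 1) = p + q + r + 3 by ring,
        show p + 1 + q + 1 + (r + 1) = p + q + r + 3 by ring,
        show p + 1 + (q + 1) + 1 + r = p + q + r + 3 by ring]
      push_cast; ring

theorem ct_eq_s11 (p q r : ℕ) : dysonCT 3 ![p, q, r + 1] ![1, 0, -1] = f p q r := by
  unfold dysonCT f
  rw [if_pos, G_eq]
  · congr 1
    ext i
    fin_cases i <;> simp [ex] <;> omega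
  · intro j
    fin_cases j <;> simp <;> omega

end DysonAux

/-- Closed form for `c_3(⟨a_1, a_2, a_3⟩; ⟨1, 0, -1⟩)`:
`(1+a_1+a_2) a_1! a_2! a_3! · c_3 = -a_3 (a_1+a_2+a_3)!`. -/
theorem dysonCT_three_one_zero_neg_one (a₁ a₂ a₃ : ℕ) :
    (1 + (a₁ : ℤ) + a₂) * (a₁.factorial : ℤ) * (a₂.factorial : ℤ) * (a₃.factorial : ℤ) *
        dysonCT 3 ![a₁, a₂, a₃] ![1, 0, -1]
      = -(a₃ : ℤ) * ((a₁ + a₂ + a₃).factorial : ℤ) := by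
  rcases a₃ with _ | r
  · have : dysonCT 3 ![a₁, a₂, 0] ![1, 0, -1] = 0 := by
      unfold dysonCT
      rw [if_neg]
      intro h
      have := h 2
      simp at this
    rw [this]; simp
  · rw [DysonAux.ct_eq_s11, DysonAux.f_eq _ a₁ a₂ r rfl]
    have h1 : ((a₁ + a₂).choose a₁ : ℤ) * a₁.factorial * a₂.factorial = (a₁ + a₂).factorial := by
      have := Nat.add_choose_mul_factorial_mul_factorial a₁ a₂
      rw [Nat.choose_symm_add] at *
      exact_mod_cast this
    have h2 : ((a₁ + a₂ + 1 + r).choose r : ℤ) * r.factorial * (a₁ + a₂ + 1).factorial =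
        (a₁ + a₂ + (r + 1)).factorial := by
      have := Nat.add_choose_mul_factorial_mul_factorial (a₁ + a₂ + 1) r
      rw [mul_right_comm] at this
      rw [show a₁ + a₂ + (r + 1) = a₁ + a₂ + 1 + r by ring]
      exact_mod_cast this
    rw [Nat.factorial_succ] at h2
    rw [Nat.factorial_succ r, ← h2]
    push_cast
    rw [← h1]
    ring
end

section
/- Fix a positive integer n ≥ 2 and integers b_1, …, b_n. If f is any function from n-tuples of nonnegative integers to the integers such that (i) f(a) = Σ_{i=1}^n f(⟨a_1, …, a_{i−1}, a_i − 1, a_{i+1}, …, a_n⟩) whenever all a_i ≥ 1, and (ii) f(a) = c_n(a; b) whenever at least one a_k = 0, then f(a) = c_n(a; b) for all n-tuples a of nonnegative integers. -/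
/-- Lowering one exponent removes one linear-factor product. -/
theorem dysonPoly_update (n : ℕ) (a : Fin n → ℕ) (j : Fin n) (hj : 1 ≤ a j) :
    dysonPoly n a = dysonPoly n (Function.update a j (a j - 1)) *
      ∏ i ∈ Finset.univ.erase j, (MvPolynomial.X j - MvPolynomial.X i) := by
  unfold dysonPoly
  rw [← Finset.mul_prod_erase Finset.univ _ (Finset.mem_univ j),
    ← Finset.mul_prod_erase Finset.univ
      (fun k => ∏ i ∈ Finset.univ.erase k, (MvPolynomial.X k - MvPolynomial.X i) ^
        (Function.update a j (a j - 1) k)) (Finset.mem_univ j)]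
  have h1 : ∏ k ∈ Finset.univ.erase j, ∏ i ∈ Finset.univ.erase k,
      ((MvPolynomial.X k - MvPolynomial.X i : MvPolynomial (Fin n) ℤ)) ^
        (Function.update a j (a j - 1) k) =
      ∏ k ∈ Finset.univ.erase j, ∏ i ∈ Finset.univ.erase k,
        (MvPolynomial.X k - MvPolynomial.X i) ^ a k := by
    refine Finset.prod_congr rfl fun k hk => ?_
    rw [Function.update_of_ne (Finset.ne_of_mem_erase hk)]
  rw [h1]
  simp only [Function.update_self, Finset.prod_pow]
  obtain ⟨m, hm⟩ : ∃ m, a j = m + 1 := ⟨a j - 1, by omega⟩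
  rw [hm, Nat.add_sub_cancel, pow_succ]
  ring

/-- Good's identity at the polynomial level. -/
theorem dysonPoly_rec (n : ℕ) (hn : 2 ≤ n) (a : Fin n → ℕ) (ha : ∀ i, 1 ≤ a i) :
    dysonPoly n a = ∑ j : Fin n,
      MvPolynomial.monomial (Finsupp.single j (n - 1)) (1 : ℤ) *
        dysonPoly n (Function.update a j (a j - 1)) := by
  let R := MvPolynomial (Fin n) ℤ
  let K := FractionRing R
  have hinj : Function.Injective (algebraMap R K) := IsFractionRing.injective R K
  let v : Fin n → K := fun j => algebraMap R K (MvPolynomial.X j)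
  have hv : Function.Injective v := fun i j h => MvPolynomial.X_injective (hinj h)
  have key := Lagrange.coeff_eq_sum (s := Finset.univ) (v := v) hv.injOn
    (P := (Polynomial.X : Polynomial K) ^ (n - 1))
    (by
      rw [Polynomial.degree_X_pow, Finset.card_univ, Fintype.card_fin]
      exact_mod_cast (by omega : n - 1 < n))
  simp only [Finset.card_univ, Fintype.card_fin, Polynomial.coeff_X_pow, if_true,
    Polynomial.eval_pow, Polynomial.eval_X] at key
  apply hinj
  rw [← mul_one (algebraMap R K (dysonPoly n a)), key, Finset.mul_sum, map_sum]
  refine Finset.sum_congr rfl fun j _ => ?_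
  have hD : (∏ i ∈ Finset.univ.erase j, (v j - v i)) ≠ 0 :=
    Finset.prod_ne_zero_iff.mpr fun i hi =>
      sub_ne_zero.mpr fun h => Finset.ne_of_mem_erase hi (hv h).symm
  have hm : MvPolynomial.monomial (Finsupp.single j (n - 1)) (1 : ℤ) =
      (MvPolynomial.X j) ^ (n - 1) := by
    rw [MvPolynomial.X_pow_eq_monomial]
  rw [dysonPoly_update n a j (ha j), hm, map_mul, map_mul, map_pow, map_prod]
  simp only [map_sub]
  change _ * (∏ i ∈ Finset.univ.erase j, (v j - v i)) * (v j ^ (n - 1) / _) = v j ^ (n - 1) * _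
  rw [mul_assoc, mul_div_cancel₀ _ hD, mul_comm]

/-- Good's recursion for the constant term. -/
theorem dysonCT_rec (n : ℕ) (hn : 2 ≤ n) (b : Fin n → ℤ) (a : Fin n → ℕ)
    (ha : ∀ i, 1 ≤ a i) :
    dysonCT n a b = ∑ j : Fin n, dysonCT n (Function.update a j (a j - 1)) b := by
  have hval : ∀ j k : Fin n,
      ((n : ℤ) - 1) * (Function.update a j (a j - 1) k : ℕ) + b k =
      ((n : ℤ) - 1) * a k + b k - (if k = j then (n : ℤ) - 1 else 0) := by
    intro j k
    by_cases hkj : k = j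
    · subst hkj
      have := ha k
      rw [Function.update_self, if_pos rfl]
      push_cast [this]
      ring
    · rw [Function.update_of_ne hkj, if_neg hkj, sub_zero]
  by_cases h : ∀ j, 0 ≤ ((n : ℤ) - 1) * a j + b j
  · rw [dysonCT, if_pos h, dysonPoly_rec n hn a ha, MvPolynomial.coeff_sum]
    refine Finset.sum_congr rfl fun j _ => ?_
    rw [MvPolynomial.coeff_monomial_mul', dysonCT]
    simp only [hval, one_mul]
    refine if_congr ?_ ?_ rfl
    · rw [Finsupp.single_le_iff, Finsupp.equivFunOnFinite_symm_apply_apply]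
      have hj := h j
      constructor
      · intro h2 k
        by_cases hkj : k = j
        · subst hkj
          rw [if_pos rfl]
          omega
        · rw [if_neg hkj, sub_zero]
          exact h k
      · intro h2
        have := h2 j
        rw [if_pos rfl] at this
        omega
    · congr 1
      ext k
      have hk := h k
      simp only [Finsupp.tsub_apply, Finsupp.equivFunOnFinite_symm_apply_apply,
        Finsupp.single_apply]
      by_cases hkj : k = j
      · subst hkj
        simp only [if_true]
        omega
      · rw [if_neg hkj, if_neg (Ne.symm hkj)]
        simp
  · rw [dysonCT, if_neg h, eq_comm]
    refine Finset.sum_eq_zero fun j _ => ?_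
    rw [dysonCT, if_neg]
    simp only [hval]
    intro h2
    apply h
    intro k
    have := h2 k
    split_ifs at this <;> omega

/-- Uniqueness: any `f` satisfying Good's recursion at strictly positive arguments,
and agreeing with `c_n(·; b)` whenever some component vanishes, agrees with
`c_n(·; b)` everywhere. -/
theorem dysonCT_unique (n : ℕ) (hn : 2 ≤ n) (b : Fin n → ℤ)
    (f : (Fin n → ℕ) → ℤ)
    (hrec : ∀ a : Fin n → ℕ, (∀ i, 1 ≤ a i) →
      f a = ∑ i : Fin n, f (Function.update a i (a i - 1)))
    (hbdry : ∀ a : Fin n → ℕ, (∃ k, a k = 0) → f a = dysonCT n a b) :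
    ∀ a : Fin n → ℕ, f a = dysonCT n a b := by
  intro a
  induction hs : ∑ i, a i using Nat.strong_induction_on generalizing a with
  | _ s ih =>
    by_cases hz : ∃ k, a k = 0
    · exact hbdry a hz
    · have ha : ∀ i, 1 ≤ a i := fun i => Nat.one_le_iff_ne_zero.mpr fun h0 => hz ⟨i, h0⟩
      rw [hrec a ha, dysonCT_rec n hn b a ha]
      refine Finset.sum_congr rfl fun i _ => ih _ ?_ _ rfl
      rw [← hs]
      refine Finset.sum_lt_sum (fun k _ => ?_) ⟨i, Finset.mem_univ i, ?_⟩
      · by_cases hk : k = i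
        · subst hk
          rw [Function.update_self]
          omega
        · rw [Function.update_of_ne hk]
      · rw [Function.update_self]
        have := ha i
        omega
end

section
/- For every integer n ≥ 2, every index k with 1 ≤ k ≤ n, nonnegative integers a_1, …, a_n, and integers b_1, …, b_n, the Laurent polynomial identity F_n(x; ⟨a_1, …, a_{k−1}, 0, a_{k+1}, …, a_n⟩; b) = F_{n−1}(x̂^{(k)}; â^{(k)}; 0) · [ x_k^{−b_k} ∏_{1≤i≤n, i≠k} (x_i − x_k)^{a_i} / x_i^{a_i + b_i} ] holds, where x̂^{(k)} = ⟨x_1, …, x_{k−1}, x_{k+1}, …, x_n⟩, â^{(k)} = ⟨a_1, …, a_{k−1}, a_{k+1}, …, a_n⟩, and 0 is the all-zero vector of length n − 1. -/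
theorem prod_erase_self_aux {n : ℕ} {K : Type*} [Field K] (k : Fin (n + 1))
    (f : Fin (n + 1) → K) :
    ∏ i ∈ Finset.univ.erase k, f i = ∏ i : Fin n, f (k.succAbove i) := by
  have h : Finset.univ.erase k = Finset.univ.map k.succAboveEmb := by
    ext i
    simp [Fin.exists_succAbove_eq_iff]
  rw [h, Finset.prod_map]
  rfl

theorem prod_erase_succAbove_aux {n : ℕ} {K : Type*} [Field K] (k : Fin (n + 1)) (j : Fin n)
    (f : Fin (n + 1) → K) :
    ∏ i ∈ Finset.univ.erase (k.succAbove j), f i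
      = f k * ∏ i ∈ Finset.univ.erase j, f (k.succAbove i) := by
  have h : Finset.univ.erase (k.succAbove j)
      = insert k ((Finset.univ.erase j).map k.succAboveEmb) := by
    ext i
    rcases Fin.eq_self_or_eq_succAbove k i with rfl | ⟨i, rfl⟩
    · simp [(Fin.succAbove_ne i j).symm]
    · simp
  rw [h, Finset.prod_insert (by simp), Finset.prod_map]
  rfl

theorem dysonF_update_zero_aux {n : ℕ} {K : Type*} [Field K] (x : Fin (n + 1) → K)
    (hx : ∀ i, x i ≠ 0) (k : Fin (n + 1)) (a : Fin (n + 1) → ℕ) (b : Fin (n + 1) → ℤ) :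
    dysonF x (Function.update a k 0) b
      = dysonF (x ∘ k.succAbove) (a ∘ k.succAbove) 0 *
          (x k ^ (-(b k)) *
            ∏ i ∈ Finset.univ.erase k, (x i - x k) ^ a i / x i ^ ((a i : ℤ) + b i)) := by
  have key : ∀ i, (x i - x k) ^ a i / x i ^ ((a i : ℤ) + b i)
      = x i ^ (-(b i)) * (1 - x k / x i) ^ a i := by
    intro i
    rw [one_sub_div (hx i), div_pow, zpow_add₀ (hx i), zpow_natCast, zpow_neg]
    have := hx i
    have := zpow_ne_zero (b i) (hx i)
    field_simp
  unfold dysonF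
  rw [prod_erase_self_aux, Fin.prod_univ_succAbove _ k, Fin.prod_univ_succAbove _ k]
  simp only [key, prod_erase_succAbove_aux, Function.update_self, pow_zero,
    Finset.prod_const_one, Finset.prod_mul_distrib, Function.comp_apply, Pi.zero_apply, neg_zero,
    zpow_zero, one_mul, ne_eq, Fin.succAbove_ne, not_false_eq_true, Function.update_of_ne]
  ring

/-- For `n ≥ 2` and `1 ≤ k ≤ n`, setting `a_k = 0` factors the Dyson product:
`F_n(x; ⟨a_1, …, 0, …, a_n⟩; b)
  = F_{n-1}(x̂⁽ᵏ⁾; â⁽ᵏ⁾; 0) · [x_k^{-b_k} ∏_{i ≠ k} (x_i - x_k)^{a_i} / x_i^{a_i + b_i}]`. -/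
theorem dysonF_update_zero (n : ℕ) (hn : 1 ≤ n) (k : Fin (n + 1))
    (a : Fin (n + 1) → ℕ) (b : Fin (n + 1) → ℤ) :
    dysonF (xvar (n + 1)) (Function.update a k 0) b
      = dysonF (xvar (n + 1) ∘ k.succAbove) (a ∘ k.succAbove) 0 *
          (xvar (n + 1) k ^ (-(b k)) *
            ∏ i ∈ Finset.univ.erase k,
              (xvar (n + 1) i - xvar (n + 1) k) ^ a i /
                xvar (n + 1) i ^ ((a i : ℤ) + b i)) := by
  exact dysonF_update_zero_aux _ (fun i => by simp [xvar]) k a b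
end
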